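/- Let N ∈ ℕ₊, δ > 0, m > 0. A permanent fault of normalized magnitude m is guaranteed detectable by some MA-TCC window length, i.e., there exists W ∈ ℕ₊ with m > 2δ√((N+W)/(W(N+1))), if and only if (1/N)·(((N+1)/(4δ²)) m² − 1) > 0, i.e., m > 2δ/√(N+1). -/

import Mathlib

/-- Corollary 2: a PF of normalized magnitude m is guaranteed detectable
by some window length iff (1/N)(((N+1)/(4δ²))m² − 1) > 0, i.e. iff m > 2δ/√(N+1). -/
theorem pf_detectability
    (N : ℕ+) (δ m : ℝ) (hδ : 0 < δ) (hm : 0 < m) :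
    ((∃ W : ℕ+,
        m > 2 * δ * Real.sqrt (((N : ℝ) + (W : ℝ)) / ((W : ℝ) * ((N : ℝ) + 1)))) ↔
      (1 / (N : ℝ)) * (((N : ℝ) + 1) / (4 * δ ^ 2) * m ^ 2 - 1) > 0) ∧
    ((1 / (N : ℝ)) * (((N : ℝ) + 1) / (4 * δ ^ 2) * m ^ 2 - 1) > 0 ↔
      m > 2 * δ / Real.sqrt ((N : ℝ) + 1)) := by
  have hN : (0 : ℝ) < (N : ℝ) := by exact_mod_cast N.pos
  have hB : (1 / (N : ℝ)) * (((N : ℝ) + 1) / (4 * δ ^ 2) * m ^ 2 - 1) > 0 ↔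
      4 * δ ^ 2 < ((N : ℝ) + 1) * m ^ 2 := by
    rw [gt_iff_lt, mul_pos_iff_of_pos_left (by positivity), sub_pos, div_mul_eq_mul_div,
      lt_div_iff₀ (by positivity), one_mul]
  have hA : ∀ w : ℝ, 0 < w →
      (m > 2 * δ * Real.sqrt (((N : ℝ) + w) / (w * ((N : ℝ) + 1))) ↔
        (N : ℝ) * (4 * δ ^ 2) < w * (((N : ℝ) + 1) * m ^ 2 - 4 * δ ^ 2)) := by
    intro w hw
    rw [gt_iff_lt, mul_comm, ← lt_div_iff₀ (by positivity), Real.sqrt_lt' (by positivity),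
      div_pow, div_lt_div_iff₀ (by positivity) (by positivity)]
    constructor <;> intro h <;> nlinarith [h]
  rw [hB]
  refine ⟨⟨?_, ?_⟩, ?_⟩
  · rintro ⟨W, hW⟩
    have hw : (0 : ℝ) < (W : ℝ) := by exact_mod_cast W.pos
    have h := (hA _ hw).1 hW
    have h0 : 0 < (W : ℝ) * (((N : ℝ) + 1) * m ^ 2 - 4 * δ ^ 2) :=
      lt_trans (by positivity) h
    exact sub_pos.1 (pos_of_mul_pos_right h0 hw.le)
  · intro h
    obtain ⟨n, hn⟩ := exists_nat_gt
      ((N : ℝ) * (4 * δ ^ 2) / (((N : ℝ) + 1) * m ^ 2 - 4 * δ ^ 2))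
    have hx := sub_pos.2 h
    have hn0 : (0 : ℝ) < (n : ℝ) := lt_trans (by positivity) hn
    exact ⟨⟨n, by exact_mod_cast hn0⟩, (hA _ (by exact_mod_cast hn0)).2
      ((div_lt_iff₀ hx).1 hn)⟩
  · rw [gt_iff_lt, div_lt_iff₀ (by positivity),
      ← pow_lt_pow_iff_left₀ (a := 2 * δ) (by positivity) (by positivity) two_ne_zero, mul_pow m,
      Real.sq_sqrt (by positivity)]
    constructor <;> intro h <;> nlinarith [h]
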